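/- Let v be an admissible velocity field on [0,T] × ℝ^D, let ε > 0, let μ_0 be a finite Borel measure on ℝ^D, and define for t ∈ [0,T) the measure μ_t by ∫ ψ dμ_t = ∫_{S_t} exp(−ε ∫_0^t |v_s(X_s(x))| ds) · ψ(X_t(x)) dμ_0(x). Let L* > 0, let D_{L*} ⊆ ℝ^D be the closed ball of radius L*, let 0 ≤ t_1 < t_2 < T, and let Ω̄(t_1), Ω̄(t_2) ⊆ ℝ^D be Borel sets. Assume the no-return containment property: for every x ∈ S_{t_2} ∩ D_{L*} with X_{t_2}(x) ∈ Ω̄(t_2), one has X_{t_1}(x) ∈ Ω̄(t_1). Then μ_{t_2}(Ω̄(t_2)) ≤ μ_{t_1}(Ω̄(t_1)) + μ_0(ℝ^D ∖ D_{L*}). -/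

import Mathlib

/-!
On the survivors at time `t₂` with `X_{t₂} ∈ Ω₂`, either the starting point lies outside the ball,
where the weight is at most `1`, or the no-return property gives `X_{t₁} ∈ Ω₁`, and the weight at
`t₂` is at most the one at `t₁` because path length grows (`MaxFlow.length_mono`). Integrating this
pointwise bound over `S_{t₂} ⊆ S_{t₁}` gives the claim.

The pointwise bound holds only on `S_{t₂}`, so integrating it needs `S_{t₂}` to be measurable. In
fact it is open (`MaxFlow.isOpen_lt_tau`): a solution on a closed interval `[0,b]` is stable under
perturbation of the initial point (`IsAdmissible.exists_sol_near`). The Picard map from a nearby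
point contracts a ball around the given solution in the norm `sup_t exp (-c t) |Y_t|` once
`∫_0^t ℓ(s) exp (c s) ds ≤ exp (c t) / 2`, where `ℓ` is the integrable Lipschitz constant of the
field on a compact neighbourhood; `exists_rate` provides such a `c`.
-/

open MeasureTheory Set Filter Topology

noncomputable section

/-- `D`-dimensional Euclidean space. -/
abbrev Euc (D : ℕ) := EuclideanSpace ℝ (Fin D)

/-- The least Lipschitz constant of `f` on the set `K` (junk value if `f` is not
Lipschitz on `K`). -/
def lipOn {D : ℕ} (f : Euc D → Euc D) (K : Set (Euc D)) : ℝ :=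
  sInf {C : ℝ | 0 ≤ C ∧ LipschitzOnWith C.toNNReal f K}

/-- `f_K(t) = sup_{x ∈ K} |v_t(x)| + Lip(v_t, K)`. -/
def fks {D : ℕ} (v : ℝ → Euc D → Euc D) (K : Set (Euc D)) (t : ℝ) : ℝ :=
  sSup ((fun x => ‖v t x‖) '' K) + lipOn (v t) K

/-- An admissible velocity field on `[0,T] × ℝ^D`. -/
structure IsAdmissible {D : ℕ} (T : ℝ) (v : ℝ → Euc D → Euc D) : Prop where
  meas : ∀ x : Euc D, Measurable fun t => v t x
  locLip : ∀ t ∈ Icc (0:ℝ) T, LocallyLipschitz (v t)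
  integ : ∀ K : Set (Euc D), IsCompact K → IntegrableOn (fks v K) (Ioc 0 T) volume

/-- A solution of the ODE `Ẋ = v_t(X)`, `X_0 = x`, on the interval `[0, σ)`, in
integral form. -/
def IsSolOn {D : ℕ} (v : ℝ → Euc D → Euc D) (x : Euc D) (σ : ℝ) (X : ℝ → Euc D) : Prop :=
  ContinuousOn X (Ico 0 σ) ∧ ∀ t ∈ Ico (0:ℝ) σ, X t = x + ∫ s in (0:ℝ)..t, v s (X s)

/-- The maximal flow of an admissible velocity field: `X t x` is the value at time `t`
of the unique maximal solution starting at `x`, and `tau x` is its maximal existence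
time. -/
structure MaxFlow {D : ℕ} (T : ℝ) (v : ℝ → Euc D → Euc D) where
  tau : Euc D → ℝ
  X : ℝ → Euc D → Euc D
  tau_mem : ∀ x, tau x ∈ Ioc (0:ℝ) T
  sol : ∀ x, IsSolOn v x (tau x) fun t => X t x
  maximal : ∀ x, ∀ σ : ℝ, σ ≤ T → ∀ Y : ℝ → Euc D, IsSolOn v x σ Y →
    σ ≤ tau x ∧ ∀ t ∈ Ico (0:ℝ) σ, Y t = X t x

open scoped ENNReal

/-! ### Bounds on admissible fields along bounded curves -/

section
variable {D : ℕ} {T : ℝ} {v : ℝ → Euc D → Euc D}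

lemma lipOn_nonneg (f : Euc D → Euc D) (K : Set (Euc D)) : 0 ≤ lipOn f K :=
  Real.sInf_nonneg fun _ h => h.1

lemma fks_nonneg (v : ℝ → Euc D → Euc D) (K : Set (Euc D)) (t : ℝ) : 0 ≤ fks v K t := by
  refine add_nonneg (Real.sSup_nonneg ?_) (lipOn_nonneg _ _)
  rintro _ ⟨x, _, rfl⟩
  exact norm_nonneg _

lemma IsAdmissible.norm_le_fks (hv : IsAdmissible T v) {K : Set (Euc D)} (hK : IsCompact K)
    {t : ℝ} (ht : t ∈ Icc 0 T) {x : Euc D} (hx : x ∈ K) : ‖v t x‖ ≤ fks v K t := by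
  have hb : BddAbove ((fun x => ‖v t x‖) '' K) :=
    (hK.image (hv.locLip t ht).continuous.norm).bddAbove
  have := le_csSup hb (mem_image_of_mem _ hx)
  have := lipOn_nonneg (v t) K
  simp only [fks]
  linarith

lemma IsAdmissible.norm_sub_le_fks (hv : IsAdmissible T v) {K : Set (Euc D)} (hK : IsCompact K)
    {t : ℝ} (ht : t ∈ Icc 0 T) {x y : Euc D} (hx : x ∈ K) (hy : y ∈ K) :
    ‖v t x - v t y‖ ≤ fks v K t * ‖x - y‖ := by
  have hlip : ‖v t x - v t y‖ ≤ lipOn (v t) K * ‖x - y‖ := by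
    rcases eq_or_ne x y with rfl | hxy
    · simp
    have hpos : 0 < ‖x - y‖ := norm_sub_pos_iff.2 hxy
    rw [← div_le_iff₀ hpos]
    obtain ⟨C, hC⟩ := (hv.locLip t ht).locallyLipschitzOn.exists_lipschitzOnWith_of_compact hK
    refine le_csInf ⟨C, C.2, by simpa using hC⟩ ?_
    rintro A ⟨hA, hL⟩
    rw [div_le_iff₀ hpos]
    simpa [hA, dist_eq_norm] using hL.dist_le_mul x hx y hy
  refine hlip.trans (mul_le_mul_of_nonneg_right ?_ (norm_nonneg _))
  have : 0 ≤ sSup ((fun x => ‖v t x‖) '' K) := Real.sSup_nonneg (by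
    rintro _ ⟨x, _, rfl⟩
    exact norm_nonneg _)
  simp only [fks]
  linarith

/-- The field along a measurable curve is measurable in time: a Carathéodory function is jointly
measurable. -/
lemma IsAdmissible.aestronglyMeasurable (hv : IsAdmissible T v) {Y : ℝ → Euc D}
    (hY : Measurable Y) :
    AEStronglyMeasurable (fun s => v s (Y s)) (volume.restrict (Ioc 0 T)) := by
  let w : Euc D → ℝ → Euc D := fun y => (Icc (0 : ℝ) T).indicator fun s => v s y
  have hw : Measurable (Function.uncurry w) := by
    refine measurable_uncurry_of_continuous_of_measurable (fun s => ?_)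
      (fun y => (hv.meas y).indicator measurableSet_Icc)
    by_cases hs : s ∈ Icc (0 : ℝ) T
    · simpa [w, indicator_of_mem hs] using (hv.locLip s hs).continuous
    · simpa [w, indicator_of_notMem hs] using continuous_const
  have h1 : Measurable fun s => w (Y s) s := hw.comp (hY.prodMk measurable_id)
  refine h1.aestronglyMeasurable.congr ?_
  filter_upwards [ae_restrict_mem measurableSet_Ioc] with s hs
  exact indicator_of_mem (Ioc_subset_Icc_self hs) _

lemma IsAdmissible.integrableOn (hv : IsAdmissible T v) {b R : ℝ} (hbT : b ≤ T) {Y : ℝ → Euc D}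
    (hY : Measurable Y) (hR : ∀ s ∈ Icc 0 b, ‖Y s‖ ≤ R) :
    IntegrableOn (fun s => v s (Y s)) (Ioc 0 b) volume := by
  have hsub : Ioc 0 b ⊆ Ioc 0 T := Ioc_subset_Ioc_right hbT
  have hK : IsCompact (Metric.closedBall (0 : Euc D) R) := isCompact_closedBall _ _
  refine ((hv.integ _ hK).mono_set hsub).mono' ((hv.aestronglyMeasurable hY).mono_measure
    (Measure.restrict_mono hsub le_rfl)) ?_
  filter_upwards [ae_restrict_mem measurableSet_Ioc] with s hs
  exact hv.norm_le_fks hK ⟨hs.1.le, hs.2.trans hbT⟩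
    (by simpa using hR s (Ioc_subset_Icc_self hs))

lemma IsAdmissible.integrableOn_of_continuousOn (hv : IsAdmissible T v) {b : ℝ} (hb : 0 ≤ b)
    (hbT : b ≤ T) {Y : ℝ → Euc D} (hY : ContinuousOn Y (Icc 0 b)) :
    IntegrableOn (fun s => v s (Y s)) (Ioc 0 b) volume := by
  obtain ⟨R, hR⟩ := isCompact_Icc.exists_bound_of_continuousOn hY
  have hE : Continuous (IccExtend hb ((Icc 0 b).domRestrict Y)) :=
    hY.domRestrict.Icc_extend'
  have heq : ∀ s ∈ Icc 0 b, IccExtend hb ((Icc 0 b).domRestrict Y) s = Y s := fun s hs => by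
    rw [IccExtend_of_mem _ _ hs, domRestrict_apply]
  refine (hv.integrableOn hbT hE.measurable (R := R)
    (fun s hs => by rw [heq s hs]; exact hR s hs)).congr_fun (fun s hs => ?_) measurableSet_Ioc
  simp only [heq s (Ioc_subset_Icc_self hs)]

end

/-! ### Stability of solutions -/

/-- Exponential weights tame an integrable Lipschitz constant: split `ℓ` into a bounded part, made
small by a large rate `c`, and a part of small integral. -/
lemma exists_rate {b : ℝ} {l : ℝ → ℝ} (hl : IntegrableOn l (Ioc 0 b) volume) :
    ∃ c : ℝ, 0 < c ∧ ∀ t ∈ Icc 0 b,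
      ∫ s in (0:ℝ)..t, l s * Real.exp (c * s) ≤ Real.exp (c * t) / 2 := by
  have hlim : Tendsto (fun n : ℕ => ∫ s in Ioc 0 b, max (l s - n) 0) atTop
      (𝓝 (∫ s in Ioc 0 b, (0 : ℝ))) := by
    refine tendsto_integral_of_dominated_convergence (fun s => |l s|) (fun n => ?_) hl.abs
      (fun n => ?_) ?_
    · exact (hl.aestronglyMeasurable.sub aestronglyMeasurable_const).sup
        aestronglyMeasurable_const
    · refine Eventually.of_forall fun s => ?_
      rw [Real.norm_of_nonneg (le_max_right _ _)]
      have : (0 : ℝ) ≤ n := n.cast_nonneg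
      exact max_le (by linarith [le_abs_self (l s)]) (abs_nonneg _)
    · refine Eventually.of_forall fun s => tendsto_const_nhds.congr' ?_
      obtain ⟨N, hN⟩ := exists_nat_ge (l s)
      filter_upwards [eventually_ge_atTop N] with n hn
      have : (N : ℝ) ≤ n := by exact_mod_cast hn
      exact (max_eq_right (by linarith)).symm
  simp only [integral_zero] at hlim
  obtain ⟨n, hn⟩ := (hlim.eventually (gt_mem_nhds (show (0:ℝ) < 1 / 4 by norm_num))).exists
  have hc : (0:ℝ) < 4 * n + 1 := by positivity
  refine ⟨4 * n + 1, hc, fun t ht => ?_⟩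
  generalize hcdef : (4 * n + 1 : ℝ) = c at *
  have hsub : Ioc 0 t ⊆ Ioc 0 b := Ioc_subset_Ioc_right ht.2
  have hmaxb : IntegrableOn (fun s => max (l s - n) 0) (Ioc 0 b) volume :=
    (hl.sub (integrable_const (n : ℝ))).pos_part
  have hmax : IntervalIntegrable (fun s => max (l s - n) 0) volume 0 t :=
    (intervalIntegrable_iff_integrableOn_Ioc_of_le ht.1).2 (hmaxb.mono_set hsub)
  have hlt : IntervalIntegrable l volume 0 t :=
    (intervalIntegrable_iff_integrableOn_Ioc_of_le ht.1).2 (hl.mono_set hsub)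
  have hexp : Continuous fun s : ℝ => Real.exp (c * s) := by fun_prop
  have i1 : IntervalIntegrable (fun s => (n : ℝ) * Real.exp (c * s)) volume 0 t :=
    (hexp.const_mul _).intervalIntegrable _ _
  have i2 : IntervalIntegrable (fun s => max (l s - n) 0 * Real.exp (c * t)) volume 0 t :=
    hmax.mul_const _
  have h1 : ∫ s in (0:ℝ)..t, l s * Real.exp (c * s) ≤
      ∫ s in (0:ℝ)..t, ((n : ℝ) * Real.exp (c * s) + max (l s - n) 0 * Real.exp (c * t)) := by
    refine intervalIntegral.integral_mono_on ht.1 (hlt.mul_continuousOn hexp.continuousOn)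
      (i1.add i2) fun s hs => ?_
    have e1 : Real.exp (c * s) ≤ Real.exp (c * t) :=
      Real.exp_le_exp.2 (mul_le_mul_of_nonneg_left hs.2 hc.le)
    have e0 := Real.exp_pos (c * s)
    have m1 := le_max_left (l s - n) 0
    have m0 := le_max_right (l s - n) 0
    have := mul_le_mul_of_nonneg_left e1 m0
    have := mul_le_mul_of_nonneg_right m1 e0.le
    nlinarith
  have h2 : ∫ s in (0:ℝ)..t, max (l s - n) 0 ≤ 1 / 4 := by
    rw [intervalIntegral.integral_of_le ht.1]
    exact (setIntegral_mono_set hmaxb (Eventually.of_forall fun s => le_max_right _ _)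
      hsub.eventuallyLE).trans hn.le
  have h3 : ∫ s in (0:ℝ)..t, Real.exp (c * s) = (Real.exp (c * t) - 1) / c := by
    rw [intervalIntegral.integral_comp_mul_left _ hc.ne', integral_exp]
    simp [div_eq_inv_mul]
  rw [intervalIntegral.integral_add i1 i2, intervalIntegral.integral_const_mul,
    intervalIntegral.integral_mul_const, h3] at h1
  have e0 := Real.exp_pos (c * t)
  have h4 : (n : ℝ) * ((Real.exp (c * t) - 1) / c) ≤ Real.exp (c * t) / 4 := by
    rw [mul_div_assoc', div_le_iff₀ hc]
    have h5 : Real.exp (c * t) / 4 * c = n * Real.exp (c * t) + Real.exp (c * t) / 4 := by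
      linear_combination (-Real.exp (c * t) / 4) * hcdef
    nlinarith [(n.cast_nonneg : (0:ℝ) ≤ n)]
  nlinarith [mul_le_mul_of_nonneg_right h2 e0.le]

/-- If a solution from `x₀` exists up to time `b` included, then so do solutions from nearby points.
They are fixed points of the Picard map, which contracts a small ball around the given solution
in an exponentially weighted sup norm. -/
lemma IsAdmissible.exists_sol_near {D : ℕ} {T : ℝ} {v : ℝ → Euc D → Euc D}
    (hv : IsAdmissible T v) {b : ℝ} (hb : 0 ≤ b) (hbT : b ≤ T) {x₀ : Euc D} {p : ℝ → Euc D}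
    (hpc : ContinuousOn p (Icc 0 b))
    (hp : ∀ t ∈ Icc 0 b, p t = x₀ + ∫ s in (0:ℝ)..t, v s (p s)) :
    ∃ η > 0, ∀ x, ‖x - x₀‖ ≤ η → ∃ Y, IsSolOn v x b Y := by
  obtain ⟨R, hR⟩ := isCompact_Icc.exists_bound_of_continuousOn hpc
  set K := Metric.closedBall (0 : Euc D) (R + 1) with hKdef
  have hK : IsCompact K := isCompact_closedBall _ _
  have hl : IntegrableOn (fks v K) (Ioc 0 b) volume :=
    (hv.integ K hK).mono_set (Ioc_subset_Ioc_right hbT)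
  obtain ⟨c, hc, hrate⟩ := exists_rate hl
  set δ := Real.exp (-(c * b)) with hδ
  have hδ0 : 0 < δ := Real.exp_pos _
  -- A weighted curve `u` encodes the curve `Y u s = exp (c s) • u s`.
  let Y : C(Icc (0:ℝ) b, Euc D) → ℝ → Euc D :=
    fun u s => Real.exp (c * s) • IccExtend hb u s
  have hYc : ∀ u, Continuous (Y u) := fun u =>
    (by fun_prop : Continuous fun s : ℝ => Real.exp (c * s)).smul u.continuous.Icc_extend'
  have hYsub : ∀ u w s, ‖Y u s - Y w s‖ ≤ Real.exp (c * s) * dist u w := fun u w s => by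
    simp only [Y, ← smul_sub, norm_smul, Real.norm_of_nonneg (Real.exp_pos _).le]
    refine mul_le_mul_of_nonneg_left ?_ (Real.exp_pos _).le
    rw [← dist_eq_norm]
    exact ContinuousMap.dist_apply_le_dist _
  let u₀ : C(Icc (0:ℝ) b, Euc D) :=
    ⟨fun t => Real.exp (-(c * t)) • p t,
      (by fun_prop : Continuous fun t : Icc (0:ℝ) b => Real.exp (-(c * t))).smul hpc.domRestrict⟩
  have hYu₀ : ∀ s ∈ Icc 0 b, Y u₀ s = p s := fun s hs => by
    simp [Y, u₀, IccExtend_of_mem _ _ hs, smul_smul, ← Real.exp_add]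
  have hYK : ∀ u ∈ Metric.closedBall u₀ δ, ∀ s ∈ Icc 0 b, ‖Y u s‖ ≤ R + 1 := fun u hu s hs => by
    have h1 := hYsub u u₀ s
    rw [hYu₀ s hs] at h1
    have h2 : Real.exp (c * s) * dist u u₀ ≤ 1 := by
      calc Real.exp (c * s) * dist u u₀ ≤ Real.exp (c * b) * δ := by
            gcongr
            · exact hs.2
            · exact hu
        _ = 1 := by rw [hδ, ← Real.exp_add]; simp
    have h3 := norm_le_insert' (Y u s) (p s)
    linarith [hR s hs]
  have hint : ∀ u ∈ Metric.closedBall u₀ δ,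
      IntegrableOn (fun s => v s (Y u s)) (Ioc 0 b) volume := fun u hu =>
    hv.integrableOn hbT (hYc u).measurable (hYK u hu)
  have hii : ∀ u ∈ Metric.closedBall u₀ δ, ∀ t ∈ Icc 0 b,
      IntervalIntegrable (fun s => v s (Y u s)) volume 0 t := fun u hu t ht =>
    (intervalIntegrable_iff_integrableOn_Ioc_of_le ht.1).2
      ((hint u hu).mono_set (Ioc_subset_Ioc_right ht.2))
  have hcontr : ∀ u ∈ Metric.closedBall u₀ δ, ∀ w ∈ Metric.closedBall u₀ δ, ∀ t ∈ Icc 0 b,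
      Real.exp (-(c * t)) *
        ‖(∫ s in (0:ℝ)..t, v s (Y u s)) - ∫ s in (0:ℝ)..t, v s (Y w s)‖ ≤ dist u w / 2 := by
    intro u hu w hw t ht
    rw [← intervalIntegral.integral_sub (hii u hu t ht) (hii w hw t ht)]
    have hlt : IntervalIntegrable (fun s => fks v K s * Real.exp (c * s)) volume 0 t :=
      ((intervalIntegrable_iff_integrableOn_Ioc_of_le ht.1).2
        (hl.mono_set (Ioc_subset_Ioc_right ht.2))).mul_continuousOn (by fun_prop)
    have h1 : ‖∫ s in (0:ℝ)..t, v s (Y u s) - v s (Y w s)‖ ≤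
        ∫ s in (0:ℝ)..t, fks v K s * Real.exp (c * s) * dist u w := by
      refine intervalIntegral.norm_integral_le_of_norm_le ht.1
        (Eventually.of_forall fun s hs => ?_) (hlt.mul_const _)
      have hs' : s ∈ Icc 0 b := ⟨hs.1.le, hs.2.trans ht.2⟩
      have h2 := hv.norm_sub_le_fks hK ⟨hs'.1, hs'.2.trans hbT⟩ (x := Y u s) (y := Y w s)
        (by simpa [hKdef] using hYK u hu s hs') (by simpa [hKdef] using hYK w hw s hs')
      rw [mul_assoc]
      exact h2.trans (mul_le_mul_of_nonneg_left (hYsub u w s) (fks_nonneg _ _ _))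
    rw [intervalIntegral.integral_mul_const] at h1
    have h3 := h1.trans (mul_le_mul_of_nonneg_right (hrate t ht) dist_nonneg)
    calc _ ≤ Real.exp (-(c * t)) * (Real.exp (c * t) / 2 * dist u w) :=
          mul_le_mul_of_nonneg_left h3 (Real.exp_pos _).le
      _ = (Real.exp (-(c * t)) * Real.exp (c * t)) * (dist u w / 2) := by ring
      _ = dist u w / 2 := by rw [← Real.exp_add]; simp
  refine ⟨δ / 2, by positivity, fun x hx => ?_⟩
  have hexΦ : ∀ u : Metric.closedBall u₀ δ, ∃ w : C(Icc (0:ℝ) b, Euc D), ∀ t : Icc (0:ℝ) b,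
      w t = Real.exp (-(c * t)) • (x + ∫ s in (0:ℝ)..t, v s (Y u s)) := by
    intro u
    have hprim : ContinuousOn (fun t => ∫ s in (0:ℝ)..t, v s (Y u s)) (Icc 0 b) := by
      have := intervalIntegral.continuousOn_primitive_interval (a := 0) (b := b) (μ := volume)
        (f := fun s => v s (Y u s))
        (by rw [uIcc_of_le hb, integrableOn_Icc_iff_integrableOn_Ioc]; exact hint u u.2)
      rwa [uIcc_of_le hb] at this
    exact ⟨⟨fun t => Real.exp (-(c * t)) • (x + ∫ s in (0:ℝ)..t, v s (Y u s)),
      (by fun_prop : Continuous fun t : Icc (0:ℝ) b => Real.exp (-(c * t))).smul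
        (continuous_const.add hprim.domRestrict)⟩, fun t => rfl⟩
  choose Φ hΦ using hexΦ
  have hu₀mem : u₀ ∈ Metric.closedBall u₀ δ := Metric.mem_closedBall_self hδ0.le
  have hmaps : ∀ u, Φ u ∈ Metric.closedBall u₀ δ := by
    intro u
    refine (ContinuousMap.dist_le hδ0.le).2 fun t => ?_
    have hpt : p t = x₀ + ∫ s in (0:ℝ)..t, v s (Y u₀ s) := by
      rw [hp t t.2]
      congr 1
      refine intervalIntegral.integral_congr fun s hs => ?_
      rw [uIcc_of_le t.2.1] at hs
      simp only [hYu₀ s ⟨hs.1, hs.2.trans t.2.2⟩]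
    have hu0t : u₀ t = Real.exp (-(c * t)) • p t := rfl
    rw [hΦ, hu0t, hpt, dist_eq_norm, ← smul_sub, norm_smul,
      Real.norm_of_nonneg (Real.exp_pos _).le, add_sub_add_comm]
    have h1 := hcontr u u.2 u₀ hu₀mem t t.2
    have h2 : Real.exp (-(c * t)) ≤ 1 := Real.exp_le_one_iff.2 (by
      have := mul_nonneg hc.le t.2.1
      linarith)
    have h3 : dist (u : C(Icc (0:ℝ) b, Euc D)) u₀ ≤ δ := u.2
    calc _ ≤ Real.exp (-(c * t)) * (‖x - x₀‖ + ‖(∫ s in (0:ℝ)..t, v s (Y u s)) -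
            ∫ s in (0:ℝ)..t, v s (Y u₀ s)‖) :=
          mul_le_mul_of_nonneg_left (norm_add_le _ _) (Real.exp_pos _).le
      _ ≤ δ := by
          rw [mul_add]
          have := mul_le_of_le_one_left (norm_nonneg (x - x₀)) h2
          linarith
  let Ψ : Metric.closedBall u₀ δ → Metric.closedBall u₀ δ := fun u => ⟨Φ u, hmaps u⟩
  have hΨ : ContractingWith (1 / 2) Ψ := by
    refine ⟨by rw [← NNReal.coe_lt_coe]; norm_num, LipschitzWith.of_dist_le_mul fun u w => ?_⟩
    have hd : dist (Φ u) (Φ w) ≤ dist (u : C(Icc (0:ℝ) b, Euc D)) w / 2 := by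
      refine (ContinuousMap.dist_le (by positivity)).2 fun t => ?_
      rw [hΦ, hΦ, dist_eq_norm, ← smul_sub, norm_smul,
        Real.norm_of_nonneg (Real.exp_pos _).le, add_sub_add_left_eq_sub]
      exact hcontr u u.2 w w.2 t t.2
    change dist (Φ u) (Φ w) ≤ _
    refine hd.trans (le_of_eq ?_)
    rw [Subtype.dist_eq]
    push_cast
    ring
  have : Nonempty (Metric.closedBall u₀ δ) := ⟨⟨u₀, hu₀mem⟩⟩
  have : CompleteSpace (Metric.closedBall u₀ δ) :=
    Metric.isClosed_closedBall.completeSpace_coe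
  obtain ⟨u, hu⟩ : ∃ u, Ψ u = u := ⟨_, hΨ.fixedPoint_isFixedPt⟩
  refine ⟨Y u, (hYc u).continuousOn, fun t ht => ?_⟩
  have ht' : t ∈ Icc 0 b := Ico_subset_Icc_self ht
  have h1 : (u : C(Icc (0:ℝ) b, Euc D)) ⟨t, ht'⟩ =
      Real.exp (-(c * t)) • (x + ∫ s in (0:ℝ)..t, v s (Y u s)) := by
    rw [← hΦ u ⟨t, ht'⟩]
    exact congrArg (fun w : Metric.closedBall u₀ δ =>
      (w : C(Icc (0:ℝ) b, Euc D)) ⟨t, ht'⟩) hu.symm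
  change Real.exp (c * t) • IccExtend hb u.1 t = _
  rw [IccExtend_of_mem _ _ ht', h1, smul_smul, ← Real.exp_add]
  simp

/-- The survival set `S_t` is open, i.e. the existence time is lower semicontinuous. -/
lemma MaxFlow.isOpen_lt_tau {D : ℕ} {T : ℝ} {v : ℝ → Euc D → Euc D} (hv : IsAdmissible T v)
    (F : MaxFlow T v) {t : ℝ} (ht : 0 ≤ t) : IsOpen {x | t < F.tau x} := by
  refine Metric.isOpen_iff.2 fun x₀ (hx₀ : t < F.tau x₀) => ?_
  obtain ⟨b, htb, hb⟩ := exists_between hx₀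
  have hbT : b ≤ T := hb.le.trans (F.tau_mem x₀).2
  have hsub : Icc 0 b ⊆ Ico 0 (F.tau x₀) := Icc_subset_Ico_right hb
  obtain ⟨η, hη, h⟩ := hv.exists_sol_near (ht.trans htb.le) hbT ((F.sol x₀).1.mono hsub)
    (fun s hs => (F.sol x₀).2 s (hsub hs))
  refine ⟨η, hη, fun x hx => ?_⟩
  obtain ⟨Y, hY⟩ := h x (by rw [← dist_eq_norm]; exact (Metric.mem_ball.1 hx).le)
  exact htb.trans_le (F.maximal x b hbT Y hY).1

/-- The path length is finite and nondecreasing in time. Finiteness matters: otherwise the later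
integral would take the junk value `0`. -/
lemma MaxFlow.length_mono {D : ℕ} {T : ℝ} {v : ℝ → Euc D → Euc D} (hv : IsAdmissible T v)
    (F : MaxFlow T v) {t₁ t₂ : ℝ} (ht₁ : 0 ≤ t₁) (h12 : t₁ ≤ t₂) {x : Euc D}
    (hx : t₂ < F.tau x) :
    ∫ s in (0:ℝ)..t₁, ‖v s (F.X s x)‖ ≤ ∫ s in (0:ℝ)..t₂, ‖v s (F.X s x)‖ := by
  have ht₂ := ht₁.trans h12
  have hint := hv.integrableOn_of_continuousOn ht₂ (hx.le.trans (F.tau_mem x).2)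
    ((F.sol x).1.mono (Icc_subset_Ico_right hx))
  exact intervalIntegral.integral_mono_interval le_rfl ht₁ h12
    (Eventually.of_forall fun _ => norm_nonneg _)
    ((intervalIntegrable_iff_integrableOn_Ioc_of_le ht₂).2 hint.norm)

/-! ### Mass monotonicity -/

/-- abstract mass monotonicity from a no-return containment property: for
the deficient measures `μ_t`, `μ_{t₂}(Ω̄(t₂)) ≤ μ_{t₁}(Ω̄(t₁)) + μ₀(ℝ^D ∖ D_{L*})`. -/
theorem stmt18 {D : ℕ} (hD : 0 < D) {T : ℝ} (hT : 0 < T)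
    {v : ℝ → Euc D → Euc D} (hv : IsAdmissible T v) (F : MaxFlow T v)
    {ε : ℝ} (hε : 0 < ε) (μ₀ : Measure (Euc D)) [IsFiniteMeasure μ₀]
    (μ : ℝ → Measure (Euc D))
    (hμ : ∀ t ∈ Ico (0:ℝ) T, ∀ ψ : Euc D → ℝ≥0∞, Measurable ψ →
      ∫⁻ y, ψ y ∂(μ t) =
        ∫⁻ x in {x | t < F.tau x},
          ENNReal.ofReal (Real.exp (-(ε * ∫ s in (0:ℝ)..t, ‖v s (F.X s x)‖))) *
            ψ (F.X t x) ∂μ₀)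
    (Lstar : ℝ) (hLstar : 0 < Lstar)
    {t₁ t₂ : ℝ} (ht₁ : 0 ≤ t₁) (h12 : t₁ < t₂) (ht₂ : t₂ < T)
    (Ω₁ Ω₂ : Set (Euc D)) (hΩ₁ : MeasurableSet Ω₁) (hΩ₂ : MeasurableSet Ω₂)
    (hnoreturn : ∀ x : Euc D, t₂ < F.tau x → x ∈ Metric.closedBall (0 : Euc D) Lstar →
      F.X t₂ x ∈ Ω₂ → F.X t₁ x ∈ Ω₁) :
    μ t₂ Ω₂ ≤ μ t₁ Ω₁ + μ₀ (univ \ Metric.closedBall (0 : Euc D) Lstar) := by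
  have hS : MeasurableSet {x | t₂ < F.tau x} :=
    (F.isOpen_lt_tau hv (ht₁.trans h12.le)).measurableSet
  have hB : MeasurableSet (univ \ Metric.closedBall (0 : Euc D) Lstar) :=
    MeasurableSet.univ.diff Metric.isClosed_closedBall.measurableSet
  have key := fun t ht (Ω : Set (Euc D)) (hΩ : MeasurableSet Ω) =>
    hμ t ht (Ω.indicator 1) (measurable_one.indicator hΩ)
  have e₂ := key t₂ ⟨ht₁.trans h12.le, ht₂⟩ Ω₂ hΩ₂
  have e₁ := key t₁ ⟨ht₁, h12.trans ht₂⟩ Ω₁ hΩ₁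
  rw [lintegral_indicator_one hΩ₂] at e₂
  rw [lintegral_indicator_one hΩ₁] at e₁
  rw [e₂, e₁]
  set f₁ : Euc D → ℝ≥0∞ := fun x =>
    ENNReal.ofReal (Real.exp (-(ε * ∫ s in (0:ℝ)..t₁, ‖v s (F.X s x)‖))) *
      Ω₁.indicator 1 (F.X t₁ x)
  set B := univ \ Metric.closedBall (0 : Euc D) Lstar with hBdef
  calc _ ≤ ∫⁻ x in {x | t₂ < F.tau x}, (f₁ x + B.indicator 1 x) ∂μ₀ := by
        refine setLIntegral_mono' hS fun x hx => ?_
        by_cases hΩ : F.X t₂ x ∈ Ω₂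
        · rw [indicator_of_mem hΩ, Pi.one_apply, mul_one]
          by_cases hxB : x ∈ B
          · rw [indicator_of_mem hxB, Pi.one_apply]
            refine le_add_left (ENNReal.ofReal_le_one.2 (Real.exp_le_one_iff.2 ?_))
            exact neg_nonpos.2 (mul_nonneg hε.le (intervalIntegral.integral_nonneg
              (ht₁.trans h12.le) fun _ _ => norm_nonneg _))
          · have hxK : x ∈ Metric.closedBall (0 : Euc D) Lstar := by
              by_contra h
              exact hxB ⟨mem_univ _, h⟩
            refine le_add_right ?_
            simp only [f₁]
            rw [indicator_of_mem (hnoreturn x hx hxK hΩ), Pi.one_apply, mul_one]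
            exact ENNReal.ofReal_le_ofReal (Real.exp_le_exp.2 (neg_le_neg
              (mul_le_mul_of_nonneg_left (F.length_mono hv ht₁ h12.le hx) hε.le)))
        · simp [indicator_of_notMem hΩ]
    -- `f₁` need not be known measurable: additivity only uses the measurability of `B.indicator 1`.
    _ = ∫⁻ x in {x | t₂ < F.tau x}, f₁ x ∂μ₀ +
          ∫⁻ x in {x | t₂ < F.tau x}, B.indicator 1 x ∂μ₀ :=
        lintegral_add_right _ (measurable_one.indicator hB)
    _ ≤ _ := by
        refine add_le_add (lintegral_mono_set fun x (hx : t₂ < F.tau x) => h12.trans hx) ?_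
        exact (setLIntegral_le_lintegral _ _).trans (lintegral_indicator_one hB).le
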